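/- arXiv:1905.13602 — 2 statements merged into one kernel-verified Lean document; each statement's English description precedes it below -/
import Mathlib

section
/- Let N be a natural number and c₀, …, c_N real numbers. Define u(x) = Σ_{n=0}^{N} cₙ·Tₙ(x) and v(x) = (2/ln 2)·c₀ + Σ_{n=1}^{N} 2n·cₙ·Tₙ(x). Then for every x in the open interval (−1,1), −(1/(2π))·∫_{−1}^{1} ln|x−y| · v(y)/√(1−y²) dy = u(x). (This is the identity S_{0,ω}⁻¹ = 2√(−(ω∂ₓ)²) + (2/ln 2)·π₀ applied to finite Chebyshev expansions, where π₀φ = (1/π)∫_{−1}^{1} φ(y)/√(1−y²) dy is the projection onto T₀ and the square root acts by Tₙ ↦ n·Tₙ.) -/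
open Real Set MeasureTheory intervalIntegral Finset

/-- The `n`-th Chebyshev polynomial of the first kind, as a real function. -/
noncomputable def chebT (n : ℕ) : ℝ → ℝ := fun x => (Polynomial.Chebyshev.T ℝ n).eval x

open Polynomial.Chebyshev in
/-- Since `U (2n+1) (cos s) = sin (2(n+1)s) / sin s`, this is `∫ sin (2(n+1)s) cot s = π`. -/
theorem integral_eval_U_cos_mul_cos (n : ℕ) :
    ∫ s in (0 : ℝ)..π, (U ℝ (2 * n + 1)).eval (cos s) * cos s = π := by
  have key (m : ℕ) : ∫ s in (0 : ℝ)..π, cos (2 * (m + 1 : ℕ) * s) = 0 := by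
    rw [integral_comp_mul_left _ (by positivity), integral_cos]
    have : 2 * ((m + 1 : ℕ) : ℝ) * π = (2 * (m + 1) : ℕ) * π := by push_cast; ring
    rw [this, sin_nat_mul_pi]
    simp
  induction n with
  | zero =>
    have h (s : ℝ) : (U ℝ (2 * (0 : ℕ) + 1)).eval (cos s) * cos s
        = 1 + cos (2 * (0 + 1 : ℕ) * s) := by
      simp [cos_two_mul, U_one]
      ring
    simp_rw [h]
    rw [intervalIntegral.integral_add (by simp)
      (Continuous.intervalIntegrable (by fun_prop) _ _), key]
    simp
  | succ n ih =>
    have h (s : ℝ) : (U ℝ (2 * (n + 1 : ℕ) + 1)).eval (cos s) * cos s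
        = (U ℝ (2 * n + 1)).eval (cos s) * cos s
          + (cos (2 * (n + 1 + 1 : ℕ) * s) + cos (2 * (n + 1 : ℕ) * s)) := by
      have e : (2 * (n + 1 : ℕ) + 1 : ℤ) = (2 * n + 1) + 2 := by push_cast; ring
      have e' : ((2 * n + 1 + 2 : ℤ) : ℝ) * s = (2 * n + 3) * s := by push_cast; ring
      rw [e, U_eq_two_mul_T_add_U]
      simp only [Polynomial.eval_add, Polynomial.eval_mul, Polynomial.eval_ofNat, T_real_cos, e']
      have h1 : 2 * ((n + 1 + 1 : ℕ) : ℝ) * s = (2 * n + 3) * s + s := by push_cast; ring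
      have h2 : 2 * ((n + 1 : ℕ) : ℝ) * s = (2 * n + 3) * s - s := by push_cast; ring
      rw [h1, h2, cos_add, cos_sub]
      ring
    simp_rw [h]
    rw [intervalIntegral.integral_add (Continuous.intervalIntegrable (by fun_prop) _ _)
        (Continuous.intervalIntegrable (by fun_prop) _ _),
      intervalIntegral.integral_add (Continuous.intervalIntegrable (by fun_prop) _ _)
        (Continuous.intervalIntegrable (by fun_prop) _ _), ih, key, key]
    simp

theorem intervalIntegrable_log_sin_comp_affine (a b p q : ℝ) :
    IntervalIntegrable (fun s => log (sin (p + q * s))) volume a b := by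
  have h : AnalyticOnNhd ℝ (fun s : ℝ => sin (p + q * s)) (uIcc a b) := fun s _ => by fun_prop
  exact h.meromorphicOn.intervalIntegrable_log

open Polynomial.Chebyshev in
theorem integral_log_sin_mul_cos_two_mul {n : ℕ} (hn : n ≠ 0) :
    ∫ s in (0 : ℝ)..π, log (sin s) * cos (2 * n * s) = -π / (2 * n) := by
  obtain ⟨m, rfl⟩ := Nat.exists_eq_succ_of_ne_zero hn
  set k : ℝ := 2 * (m.succ : ℕ) with hk
  have hk0 : k ≠ 0 := by positivity
  have hU (s : ℝ) : sin (k * s) = (U ℝ (2 * m + 1)).eval (cos s) * sin s := by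
    rw [U_real_cos, hk]
    congr 1
    push_cast
    ring
  have hint : IntervalIntegrable (fun s => log (sin s) * cos (k * s)) volume 0 π :=
    IntervalIntegrable.mul_continuousOn
      (by simpa using intervalIntegrable_log_sin_comp_affine 0 π 0 1) (by fun_prop)
  have hint' : IntervalIntegrable (fun s => (U ℝ (2 * m + 1)).eval (cos s) * cos s) volume 0 π :=
    Continuous.intervalIntegrable (by fun_prop) _ _
  have ftc := integral_eq_sub_of_hasDerivAt_of_le (a := 0) (b := π)
    (f := fun s => log (sin s) * sin (k * s))
    (f' := fun s => k * (log (sin s) * cos (k * s)) + (U ℝ (2 * m + 1)).eval (cos s) * cos s)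
    pi_pos.le ?_ ?_ ((hint.const_mul k).add hint')
  · rw [intervalIntegral.integral_add (hint.const_mul k) hint',
      intervalIntegral.integral_const_mul, integral_eval_U_cos_mul_cos] at ftc
    simp only [sin_pi, sin_zero, log_zero, zero_mul, sub_zero] at ftc
    field_simp
    linarith
  · have : (fun s => log (sin s) * sin (k * s))
        = fun s => (U ℝ (2 * m + 1)).eval (cos s) * (sin s * log (sin s)) := by
      ext s
      rw [hU]
      ring
    rw [this]
    have := continuous_mul_log.comp continuous_sin
    exact (Continuous.mul (by fun_prop) this).continuousOn
  · intro s hs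
    have hsin : sin s ≠ 0 := (sin_pos_of_mem_Ioo hs).ne'
    have h1 := ((hasDerivAt_sin s).log hsin).mul (((hasDerivAt_id s).const_mul k).sin)
    convert! h1 using 1
    simp only [id, hU]
    field_simp
    ring

theorem integral_log_sin_mul_sin_two_mul (n : ℕ) :
    ∫ s in (0 : ℝ)..π, log (sin s) * sin (2 * n * s) = 0 := by
  have h := intervalIntegral.integral_comp_sub_left (a := 0) (b := π)
    (fun s => log (sin s) * sin (2 * n * s)) π
  have e (s : ℝ) : log (sin (π - s)) * sin (2 * n * (π - s))
      = -(log (sin s) * sin (2 * n * s)) := by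
    have : 2 * n * (π - s) = n * (2 * π) - 2 * n * s := by ring
    rw [sin_pi_sub, this, sin_nat_mul_two_pi_sub]
    ring
  simp only [e, sub_self, sub_zero, intervalIntegral.integral_neg] at h
  linarith

/-- The Fourier coefficients of `log |sin (· / 2)|`, in convolution form. -/
theorem integral_log_sin_sub_mul_cos (n : ℕ) (θ : ℝ) :
    ∫ φ in (-π)..π, log (sin ((θ - φ) / 2)) * cos (n * φ)
      = 2 * cos (n * θ) * ∫ s in (0 : ℝ)..π, log (sin s) * cos (2 * n * s) := by
  have hsub := intervalIntegral.integral_comp_sub_mul (a := (θ - π) / 2) (b := (θ + π) / 2)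
    (fun φ => log (sin ((θ - φ) / 2)) * cos (n * φ)) (two_ne_zero : (2 : ℝ) ≠ 0) θ
  have hper : Function.Periodic
      (fun s : ℝ => log (sin ((θ - (θ - 2 * s)) / 2)) * cos (n * (θ - 2 * s))) π := by
    intro s
    have h1 : (θ - (θ - 2 * (s + π))) / 2 = (θ - (θ - 2 * s)) / 2 + π := by ring
    have h2 : n * (θ - 2 * (s + π)) = n * (θ - 2 * s) - n * (2 * π) := by ring
    simp only [h1, h2, sin_add_pi, log_neg_eq_log, cos_sub_nat_mul_two_pi]
  have hshift := hper.intervalIntegral_add_eq ((θ - π) / 2) 0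
  rw [show (θ - π) / 2 + π = (θ + π) / 2 by ring, hsub, zero_add] at hshift
  have e1 : θ - 2 * ((θ + π) / 2) = -π := by ring
  have e2 : θ - 2 * ((θ - π) / 2) = π := by ring
  have hlog : IntervalIntegrable (fun s => log (sin s)) volume 0 π := by
    simpa using intervalIntegrable_log_sin_comp_affine 0 π 0 1
  have e (s : ℝ) : log (sin ((θ - (θ - 2 * s)) / 2)) * cos (n * (θ - 2 * s))
      = cos (n * θ) * (log (sin s) * cos (2 * n * s))
        + sin (n * θ) * (log (sin s) * sin (2 * n * s)) := by
    have h1 : (θ - (θ - 2 * s)) / 2 = s := by ring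
    have h2 : n * (θ - 2 * s) = n * θ - 2 * n * s := by ring
    rw [h1, h2, cos_sub]
    ring
  simp only [e] at hshift
  rw [e1, e2, intervalIntegral.integral_add
      ((hlog.mul_continuousOn (by fun_prop)).const_mul _)
      ((hlog.mul_continuousOn (by fun_prop)).const_mul _),
    intervalIntegral.integral_const_mul, intervalIntegral.integral_const_mul,
    integral_log_sin_mul_sin_two_mul, smul_eq_mul] at hshift
  linarith

theorem log_abs_cos_sub_cos {θ φ : ℝ} (h : cos θ ≠ cos φ) :
    log |cos θ - cos φ| = log 2 + log (sin ((θ - φ) / 2)) + log (sin ((θ + φ) / 2)) := by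
  have hc := cos_sub_cos θ φ
  have h0 : -2 * sin ((θ + φ) / 2) * sin ((θ - φ) / 2) ≠ 0 := hc ▸ sub_ne_zero.2 h
  have h1 : sin ((θ + φ) / 2) ≠ 0 := by rintro h; simp [h] at h0
  have h2 : sin ((θ - φ) / 2) ≠ 0 := by rintro h; simp [h] at h0
  rw [log_abs, hc, log_mul (by simpa using h1) h2, log_mul (by norm_num) h1, log_neg_eq_log]
  ring

theorem ae_cos_ne_cos {θ : ℝ} (hθ : θ ∈ Icc 0 π) :
    ∀ᵐ φ : ℝ, φ ∈ uIoc 0 π → cos θ ≠ cos φ := by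
  filter_upwards [compl_mem_ae_iff.2 (measure_singleton θ)] with φ hne hφ heq
  rw [uIoc_of_le pi_pos.le] at hφ
  exact hne (injOn_cos hθ (Ioc_subset_Icc_self hφ) heq).symm

theorem intervalIntegrable_log_abs_cos_sub_cos (x : ℝ) :
    IntervalIntegrable (fun φ => log |x - cos φ|) volume 0 π := by
  have h : AnalyticOnNhd ℝ (fun φ : ℝ => x - cos φ) (uIcc 0 π) := fun s _ => by fun_prop
  simpa [Function.comp_def] using h.meromorphicOn.intervalIntegrable_log

theorem integral_log_abs_cos_sub_cos_mul_cos (n : ℕ) {θ : ℝ} (hθ : θ ∈ Icc 0 π) :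
    ∫ φ in (0 : ℝ)..π, log |cos θ - cos φ| * cos (n * φ)
      = log 2 * (∫ φ in (0 : ℝ)..π, cos (n * φ))
        + 2 * cos (n * θ) * ∫ s in (0 : ℝ)..π, log (sin s) * cos (2 * n * s) := by
  have hint (a b : ℝ) :
      IntervalIntegrable (fun φ => log (sin ((θ - φ) / 2)) * cos (n * φ)) volume a b := by
    refine IntervalIntegrable.mul_continuousOn ?_ (by fun_prop)
    convert! intervalIntegrable_log_sin_comp_affine a b (θ / 2) (-1 / 2) using 4
    ring
  have hint' : IntervalIntegrable (fun φ => log (sin ((θ + φ) / 2)) * cos (n * φ)) volume 0 π := by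
    refine IntervalIntegrable.mul_continuousOn ?_ (by fun_prop)
    convert! intervalIntegrable_log_sin_comp_affine 0 π (θ / 2) (1 / 2) using 4
    ring
  have hcos : IntervalIntegrable (fun φ => log 2 * cos (n * φ)) volume 0 π :=
    Continuous.intervalIntegrable (by fun_prop) _ _
  have hrefl : ∫ φ in (0 : ℝ)..π, log (sin ((θ + φ) / 2)) * cos (n * φ)
      = ∫ φ in (-π)..0, log (sin ((θ - φ) / 2)) * cos (n * φ) := by
    have := intervalIntegral.integral_comp_neg (a := 0) (b := π)
      (fun φ => log (sin ((θ - φ) / 2)) * cos (n * φ))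
    simpa using this
  rw [← integral_log_sin_sub_mul_cos,
    ← intervalIntegral.integral_add_adjacent_intervals (hint (-π) 0) (hint 0 π), ← hrefl,
    ← intervalIntegral.integral_const_mul,
    ← intervalIntegral.integral_add hint' (hint 0 π),
    ← intervalIntegral.integral_add hcos (hint'.add (hint 0 π))]
  refine intervalIntegral.integral_congr_ae ?_
  filter_upwards [ae_cos_ne_cos hθ] with φ h hφ
  rw [log_abs_cos_sub_cos (h hφ)]
  ring

theorem integral_log_abs_cos_sub_cos {θ : ℝ} (hθ : θ ∈ Icc 0 π) :
    ∫ φ in (0 : ℝ)..π, log |cos θ - cos φ| = -(π * log 2) := by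
  have h := integral_log_abs_cos_sub_cos_mul_cos 0 hθ
  simp only [Nat.cast_zero, mul_zero, zero_mul, cos_zero, mul_one, integral_log_sin_zero_pi,
    intervalIntegral.integral_const, sub_zero, smul_eq_mul] at h
  linarith

theorem integral_log_abs_cos_sub_cos_mul_cos_of_ne_zero {n : ℕ} (hn : n ≠ 0) {θ : ℝ}
    (hθ : θ ∈ Icc 0 π) :
    ∫ φ in (0 : ℝ)..π, log |cos θ - cos φ| * cos (n * φ) = -(π / n) * cos (n * θ) := by
  have hn' : (n : ℝ) ≠ 0 := by exact_mod_cast hn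
  have h0 : ∫ φ in (0 : ℝ)..π, cos (n * φ) = 0 := by
    rw [integral_comp_mul_left _ hn', integral_cos, sin_nat_mul_pi]
    simp
  rw [integral_log_abs_cos_sub_cos_mul_cos n hθ, integral_log_sin_mul_cos_two_mul hn, h0]
  field_simp
  ring

theorem chebT_cos (n : ℕ) (θ : ℝ) : chebT n (cos θ) = cos (n * θ) := by
  simp [chebT, Polynomial.Chebyshev.T_real_cos]

/-- The inverse of the weighted Laplace single-layer operator is
`2√(-(ω∂ₓ)²) + (2/ln 2) π₀`, expressed on finite Chebyshev expansions:
if `u = Σ cₙ Tₙ` and `v = (2/ln 2) c₀ + Σ_{n≥1} 2n cₙ Tₙ`, then `S_{0,ω} v = u`. -/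
theorem weighted_single_layer_inverse_finite (N : ℕ) (c : ℕ → ℝ) (x : ℝ)
    (hx : x ∈ Ioo (-1 : ℝ) 1) :
    -(1 / (2 * π)) * ∫ y in (-1 : ℝ)..1,
        Real.log |x - y| *
          ((2 / Real.log 2) * c 0
            + ∑ n ∈ Finset.Icc 1 N, 2 * (n : ℝ) * c n * chebT n y)
          / Real.sqrt (1 - y ^ 2)
      = ∑ n ∈ Finset.range (N + 1), c n * chebT n x := by
  obtain ⟨θ, hθ, rfl⟩ : ∃ θ ∈ Icc 0 π, cos θ = x :=
    ⟨arccos x, ⟨arccos_nonneg x, arccos_le_pi x⟩, cos_arccos hx.1.le hx.2.le⟩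
  have hlog := intervalIntegrable_log_abs_cos_sub_cos (cos θ)
  have hterm (n : ℕ) : IntervalIntegrable
      (fun φ => 2 * (n : ℝ) * c n * (log |cos θ - cos φ| * cos (n * φ))) volume 0 π :=
    (hlog.mul_continuousOn (by fun_prop)).const_mul _
  have hcov : ∫ y in (-1 : ℝ)..1, log |cos θ - y| *
        ((2 / log 2) * c 0 + ∑ n ∈ Finset.Icc 1 N, 2 * (n : ℝ) * c n * chebT n y) / √(1 - y ^ 2)
      = ∫ φ in (0 : ℝ)..π, (2 / log 2 * c 0 * log |cos θ - cos φ|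
          + ∑ n ∈ Finset.Icc 1 N, 2 * (n : ℝ) * c n * (log |cos θ - cos φ| * cos (n * φ))) := by
    simp_rw [div_eq_mul_inv _ √_, ← sqrt_inv]
    rw [← Polynomial.Chebyshev.integral_measureT,
      Polynomial.Chebyshev.integral_measureT_eq_integral_cos]
    congr 1 with φ
    simp only [chebT_cos, mul_add, Finset.mul_sum]
    congr 1
    · ring
    · exact Finset.sum_congr rfl fun n _ => by ring
  have hlog2 : log 2 ≠ 0 := (log_pos one_lt_two).ne'
  rw [hcov, intervalIntegral.integral_add (hlog.const_mul _)
      (by simpa only [Finset.sum_fn] using IntervalIntegrable.sum _ fun n _ => hterm n),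
    intervalIntegral.integral_const_mul, integral_log_abs_cos_sub_cos hθ,
    intervalIntegral.integral_finsetSum fun n _ => hterm n, mul_add, Finset.mul_sum,
    Finset.range_eq_Ico, Finset.sum_eq_sum_Ico_succ_bot N.succ_pos]
  congr 1
  · simp [chebT]
    field_simp
  · refine Finset.sum_congr (by ext; simp) fun n hn => ?_
    have hn0 : n ≠ 0 := by simp at hn; omega
    rw [intervalIntegral.integral_const_mul,
      integral_log_abs_cos_sub_cos_mul_cos_of_ne_zero hn0 hθ, chebT_cos]
    field_simp
end

section
/- Let N be a natural number and c₀, …, c_N real numbers. Define u(x) = Σ_{n=0}^{N} cₙ·Uₙ(x) and β(x) = Σ_{n=0}^{N} (2/(n+1))·cₙ·Uₙ(x). Then for every natural number m, −(1/(2π))·∫_{−1}^{1}∫_{−1}^{1} ln|x−y| · d/dx[√(1−x²)·β(x)] · d/dy[√(1−y²)·Uₘ(y)] dx dy = ∫_{−1}^{1} u(x)·Uₘ(x)·√(1−x²) dx. (This is the identity N_{0,ω}⁻¹ = 2[−(∂ₓω)²]^{−1/2} applied to finite Chebyshev expansions, tested against the complete family Uₘ in L²_ω.) -/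
open Real Set MeasureTheory intervalIntegral Finset

/-- The `n`-th Chebyshev polynomial of the second kind, as a real function. -/
noncomputable def chebU (n : ℕ) : ℝ → ℝ := fun x => (Polynomial.Chebyshev.U ℝ n).eval x

lemma integral_eq_integral_comp_cos_mul_sin (g : ℝ → ℝ) :
    ∫ x in (-1 : ℝ)..1, g x = ∫ θ in (0 : ℝ)..π, g (cos θ) * sin θ := by
  have h := integral_comp_mul_deriv_of_deriv_nonpos (f := cos) (f' := fun x => -sin x)
    (a := 0) (b := π) (g := g) continuous_cos.continuousOn
    (fun x _ => (hasDerivAt_cos x)) (fun x hx => by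
      have := sin_pos_of_pos_of_lt_pi (x := x)
        (by simpa [pi_pos.le] using hx.1) (by simpa [pi_pos.le] using hx.2)
      linarith)
  simp only [Function.comp_apply, cos_zero, cos_pi, mul_neg, intervalIntegral.integral_neg] at h
  rw [integral_symm, ← h, neg_neg]

lemma integral_cos_natCast_mul {n : ℕ} (hn : n ≠ 0) : ∫ θ in (0 : ℝ)..π, cos (n * θ) = 0 := by
  have hn' : (n : ℝ) ≠ 0 := by exact_mod_cast hn
  rw [intervalIntegral.integral_comp_mul_left _ hn', integral_cos]
  simp

lemma chebU_cos_mul_sin (n : ℕ) (θ : ℝ) : chebU n (cos θ) * sin θ = sin ((n + 1) * θ) := by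
  exact_mod_cast Polynomial.Chebyshev.U_real_cos θ (n : ℤ)

lemma continuous_chebU (n : ℕ) : Continuous (chebU n) := Polynomial.continuous _

lemma hasDerivAt_sqrt_one_sub_sq_mul_chebU (n : ℕ) {θ : ℝ} (hθ : θ ∈ Ioo 0 π) :
    HasDerivAt (fun t => √(1 - t ^ 2) * chebU n t)
      (-((n + 1) * cos ((n + 1) * θ) / sin θ)) (cos θ) := by
  have hs := sin_pos_of_mem_Ioo hθ
  have h1 : cos θ < 1 := by nlinarith [sin_sq_add_cos_sq θ]
  have h2 : -1 < cos θ := by nlinarith [sin_sq_add_cos_sq θ]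
  have hsqrt : √(1 - cos θ ^ 2) = sin θ := by
    rw [← abs_sin_eq_sqrt_one_sub_cos_sq, abs_of_pos hs]
  have h := (((hasDerivAt_arccos h2.ne' h1.ne).const_mul ((n : ℝ) + 1)).sin)
  rw [arccos_cos hθ.1.le hθ.2.le, hsqrt] at h
  refine (h.congr_of_eventuallyEq ?_).congr_deriv (by ring)
  filter_upwards [Ioo_mem_nhds h2 h1] with t ht
  rw [← chebU_cos_mul_sin, cos_arccos ht.1.le ht.2.le, sin_arccos, mul_comm]

lemma integral_cos_mul_cos_eq_integral_sin_mul_sin (n m : ℕ) :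
    ∫ θ in (0 : ℝ)..π, cos ((n + 1) * θ) * cos ((m + 1) * θ) =
      ∫ θ in (0 : ℝ)..π, sin ((n + 1) * θ) * sin ((m + 1) * θ) := by
  rw [← sub_eq_zero, ← intervalIntegral.integral_sub
    (by apply Continuous.intervalIntegrable; fun_prop)
    (by apply Continuous.intervalIntegrable; fun_prop)]
  refine Eq.trans ?_ (integral_cos_natCast_mul (n := n + m + 2) (by omega))
  apply intervalIntegral.integral_congr
  intro θ _
  simp only [← cos_add]
  push_cast
  ring_nf

lemma integral_U_two_mul_cos (k : ℕ) :
    ∫ s in (0 : ℝ)..π, chebU (2 * k) (cos s) = π := by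
  induction k with
  | zero => simp [chebU]
  | succ k ih =>
    have h : ∀ s : ℝ, chebU (2 * (k + 1)) (cos s) =
        2 * cos ((2 * k + 2 : ℕ) * s) + chebU (2 * k) (cos s) := by
      intro s
      have := congrArg (Polynomial.eval (cos s))
        (Polynomial.Chebyshev.U_eq_two_mul_T_add_U ℝ (2 * k))
      rw [Polynomial.eval_add, Polynomial.eval_mul, Polynomial.Chebyshev.T_real_cos] at this
      simpa [chebU, mul_add] using this
    simp_rw [h]
    rw [intervalIntegral.integral_add
      (by apply Continuous.intervalIntegrable; fun_prop)
      (by apply Continuous.intervalIntegrable; exact (continuous_chebU _).comp continuous_cos),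
      ih, intervalIntegral.integral_const_mul, integral_cos_natCast_mul (by omega)]
    ring

lemma integral_log_sin_mul_cos (k : ℕ) :
    ∫ s in (0 : ℝ)..π, log (sin s) * cos (2 * (k + 1) * s) = -(π / (2 * (k + 1))) := by
  have hU : ∀ s, 2 * chebU (2 * k + 1) (cos s) * cos s =
      chebU (2 * (k + 1)) (cos s) + chebU (2 * k) (cos s) := by
    intro s
    have := congrArg (Polynomial.eval (cos s))
      (Polynomial.Chebyshev.U_add_two ℝ (2 * k))
    simp only [Polynomial.eval_sub, Polynomial.eval_mul, Polynomial.eval_X,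
      Polynomial.eval_ofNat] at this
    simp only [chebU]
    push_cast
    rw [mul_add, mul_one, this]
    ring
  have hc (n : ℕ) : Continuous fun s => chebU n (cos s) := (continuous_chebU n).comp continuous_cos
  have hi : IntervalIntegrable (fun s => log (sin s)) volume 0 π := intervalIntegrable_log_sin
  have hF : ∫ s in (0 : ℝ)..π, (2 * (k + 1) * (log (sin s) * cos (2 * (k + 1) * s)) +
      chebU (2 * k + 1) (cos s) * cos s) = 0 := by
    rw [integral_eq_sub_of_hasDerivAt_of_le
      (f := fun s => chebU (2 * k + 1) (cos s) * (sin s * log (sin s))) pi_pos.le]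
    · simp
    · exact ((hc _).mul (Real.continuous_mul_log.comp continuous_sin)).continuousOn
    · intro s hs
      have hs' := sin_pos_of_mem_Ioo hs
      have h : HasDerivAt (fun s => sin (2 * (k + 1) * s) * log (sin s)) _ s :=
        (((hasDerivAt_id s).const_mul (2 * ((k : ℝ) + 1))).sin).mul
          ((hasDerivAt_sin s).log hs'.ne')
      have he : ∀ s, sin (2 * (k + 1) * s) = chebU (2 * k + 1) (cos s) * sin s := by
        intro s
        rw [chebU_cos_mul_sin]
        push_cast
        ring_nf
      refine (h.congr_of_eventuallyEq (Filter.Eventually.of_forall fun s => ?_)).congr_deriv ?_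
      · simp only [he]; ring
      · simp only [id, he]
        field_simp
    · refine ((hi.mul_continuousOn (by fun_prop)).const_mul _).add ?_
      exact ((hc _).mul continuous_cos).intervalIntegrable _ _
  rw [intervalIntegral.integral_add ((hi.mul_continuousOn (by fun_prop)).const_mul _)
    (show IntervalIntegrable (fun s => chebU (2 * k + 1) (cos s) * cos s) volume 0 π from
      ((hc _).mul continuous_cos).intervalIntegrable _ _),
    intervalIntegral.integral_const_mul] at hF
  have hG : ∫ s in (0 : ℝ)..π, chebU (2 * k + 1) (cos s) * cos s = π := by
    have : ∀ s, chebU (2 * k + 1) (cos s) * cos s =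
        2⁻¹ * (chebU (2 * (k + 1)) (cos s) + chebU (2 * k) (cos s)) := by
      intro s; rw [← hU]; ring
    simp_rw [this]
    rw [intervalIntegral.integral_const_mul, intervalIntegral.integral_add
      ((hc _).intervalIntegrable _ _) ((hc _).intervalIntegrable _ _),
      integral_U_two_mul_cos, integral_U_two_mul_cos]
    ring
  rw [hG] at hF
  field_simp
  linarith

lemma integral_log_sin_mul_sin (k : ℕ) :
    ∫ s in (0 : ℝ)..π, log (sin s) * sin (2 * (k + 1) * s) = 0 := by
  have h := intervalIntegral.integral_comp_sub_left (a := 0) (b := π)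
    (fun s => log (sin s) * sin (2 * (k + 1) * s)) π
  have he : ∀ s : ℝ, sin (2 * (k + 1) * (π - s)) = -sin (2 * (k + 1) * s) := by
    intro s
    have h2 := sin_add_nat_mul_two_pi (-(2 * (k + 1) * s)) (k + 1)
    rw [sin_neg] at h2
    rw [← h2]
    push_cast
    ring_nf
  simp only [sin_pi_sub, he, mul_neg, intervalIntegral.integral_neg, sub_self, sub_zero] at h
  linarith

lemma intervalIntegrable_log_sin_add_div_two (θ a b : ℝ) :
    IntervalIntegrable (fun φ => log (sin ((θ + φ) / 2))) volume a b := by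
  apply MeromorphicOn.intervalIntegrable_log (f := fun φ => sin ((θ + φ) / 2))
  intro φ _
  apply AnalyticAt.meromorphicAt
  fun_prop

lemma integral_log_sin_add_div_two_mul_cos (k : ℕ) (θ : ℝ) :
    ∫ φ in (-π)..π, log (sin ((θ + φ) / 2)) * cos ((k + 1) * φ) =
      -(π / (k + 1)) * cos ((k + 1) * θ) := by
  set f : ℝ → ℝ := fun s => log (sin s) * cos ((k + 1) * (2 * s - θ)) with hf
  have h1 : ∀ φ, log (sin ((θ + φ) / 2)) * cos ((k + 1) * φ) = f (θ / 2 + φ / 2) := by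
    intro φ
    simp only [hf]
    ring_nf
  have hp : Function.Periodic f π := by
    intro s
    simp only [hf, sin_add_pi, log_neg_eq_log]
    rw [← cos_add_nat_mul_two_pi ((k + 1) * (2 * s - θ)) (k + 1)]
    push_cast
    ring_nf
  have h2 : ∀ s, f s = cos ((k + 1) * θ) * (log (sin s) * cos (2 * (k + 1) * s)) +
      sin ((k + 1) * θ) * (log (sin s) * sin (2 * (k + 1) * s)) := by
    intro s
    simp only [hf]
    rw [show (k + 1) * (2 * s - θ) = 2 * (k + 1) * s - (k + 1) * θ by ring, cos_sub]
    ring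
  have hi : IntervalIntegrable (fun s => log (sin s)) volume 0 π := intervalIntegrable_log_sin
  simp_rw [h1]
  rw [intervalIntegral.integral_comp_add_div _ two_ne_zero,
    show θ / 2 + π / 2 = (θ / 2 + -π / 2) + π by ring, hp.intervalIntegral_add_eq _ 0, zero_add]
  simp_rw [h2]
  rw [intervalIntegral.integral_add ((hi.mul_continuousOn (by fun_prop)).const_mul _)
    ((hi.mul_continuousOn (by fun_prop)).const_mul _), intervalIntegral.integral_const_mul,
    intervalIntegral.integral_const_mul, integral_log_sin_mul_cos, integral_log_sin_mul_sin,
    smul_eq_mul]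
  field_simp
  ring

lemma integral_log_cos_sub_cos_mul_cos (k : ℕ) {θ : ℝ} (hθ : θ ∈ Ioo 0 π) :
    ∫ φ in (0 : ℝ)..π, log (cos θ - cos φ) * cos ((k + 1) * φ) =
      -(π / (k + 1)) * cos ((k + 1) * θ) := by
  set g : ℝ → ℝ := fun φ => log (sin ((θ + φ) / 2)) * cos ((k + 1) * φ) with hg
  have hgi : ∀ a b, IntervalIntegrable g volume a b := fun a b =>
    (intervalIntegrable_log_sin_add_div_two θ a b).mul_continuousOn (by fun_prop)
  have hgn : IntervalIntegrable (fun φ => g (-φ)) volume 0 π := by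
    simpa using (hgi 0 (-π)).comp_sub_left 0
  have hc : ∫ φ in (0 : ℝ)..π, cos ((k + 1) * φ) = 0 := by
    exact_mod_cast integral_cos_natCast_mul k.succ_ne_zero
  calc
    _ = ∫ φ in (0 : ℝ)..π, (log 2 * cos ((k + 1) * φ) + (g φ + g (-φ))) := by
      apply intervalIntegral.integral_congr_ae
      filter_upwards [compl_mem_ae_iff.2 (measure_singleton θ),
        compl_mem_ae_iff.2 (measure_singleton π)] with φ h1 h2 h3
      rw [uIoc_of_le pi_pos.le] at h3
      have h4 : φ < π := lt_of_le_of_ne h3.2 h2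
      have ha : sin ((θ + φ) / 2) ≠ 0 :=
        (sin_pos_of_pos_of_lt_pi (by linarith [hθ.1, h3.1]) (by linarith [hθ.2])).ne'
      have hb : sin ((θ - φ) / 2) ≠ 0 := by
        intro h
        rw [sin_eq_zero_iff_of_lt_of_lt (by linarith [hθ.1, pi_pos]) (by linarith [hθ.2, h3.1])] at h
        exact h1 (show φ = θ by linarith)
      rw [cos_sub_cos, log_mul (mul_ne_zero (by norm_num) ha) hb, log_mul (by norm_num) ha,
        log_neg_eq_log]
      simp only [hg, mul_neg, cos_neg, ← sub_eq_add_neg]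
      ring
    _ = ∫ φ in (-π)..π, g φ := by
      rw [intervalIntegral.integral_add (by apply Continuous.intervalIntegrable; fun_prop)
        ((hgi _ _).add hgn), intervalIntegral.integral_const_mul, hc,
        intervalIntegral.integral_add (hgi _ _) hgn, intervalIntegral.integral_comp_neg,
        ← intervalIntegral.integral_add_adjacent_intervals (hgi (-π) 0) (hgi 0 π), neg_zero]
      ring
    _ = _ := integral_log_sin_add_div_two_mul_cos k θ

lemma integral_log_abs_sub_mul_deriv (m : ℕ) {θ : ℝ} (hθ : θ ∈ Ioo 0 π) :
    ∫ y in (-1 : ℝ)..1, log |cos θ - y| * deriv (fun t => √(1 - t ^ 2) * chebU m t) y =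
      π * cos ((m + 1) * θ) := by
  rw [integral_eq_integral_comp_cos_mul_sin]
  calc
    _ = ∫ φ in (0 : ℝ)..π, -((m + 1) * (log (cos θ - cos φ) * cos ((m + 1) * φ))) := by
      apply intervalIntegral.integral_congr_Ioo_of_le pi_pos.le
      intro φ hφ
      have := sin_pos_of_mem_Ioo hφ
      simp only [(hasDerivAt_sqrt_one_sub_sq_mul_chebU m hφ).deriv, log_abs]
      field_simp
    _ = _ := by
      rw [intervalIntegral.integral_neg, intervalIntegral.integral_const_mul,
        integral_log_cos_sub_cos_mul_cos m hθ]
      field_simp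

/-- The identity `N_{0,ω}⁻¹ = 2[-(∂ₓω)²]^{-1/2}` on finite Chebyshev expansions:
if `u = Σ cₙ Uₙ` and `β = Σ (2/(n+1)) cₙ Uₙ`, then for every `m`,
`⟨N_{0,ω} β, Uₘ⟩_ω = ⟨u, Uₘ⟩_ω` in the variational sense. -/
theorem weighted_hypersingular_inverse_finite (N : ℕ) (c : ℕ → ℝ) (m : ℕ) :
    -(1 / (2 * π)) * ∫ x in (-1 : ℝ)..1, ∫ y in (-1 : ℝ)..1,
        Real.log |x - y| *
          deriv (fun t => Real.sqrt (1 - t ^ 2) *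
            (∑ n ∈ Finset.range (N + 1), (2 / ((n : ℝ) + 1)) * c n * chebU n t)) x *
          deriv (fun t => Real.sqrt (1 - t ^ 2) * chebU m t) y
      = ∫ x in (-1 : ℝ)..1,
          (∑ n ∈ Finset.range (N + 1), c n * chebU n x) * chebU m x *
            Real.sqrt (1 - x ^ 2) := by
  have hl : ∫ x in (-1 : ℝ)..1, ∫ y in (-1 : ℝ)..1,
        Real.log |x - y| *
          deriv (fun t => Real.sqrt (1 - t ^ 2) *
            (∑ n ∈ Finset.range (N + 1), (2 / ((n : ℝ) + 1)) * c n * chebU n t)) x *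
          deriv (fun t => Real.sqrt (1 - t ^ 2) * chebU m t) y =
      ∑ n ∈ Finset.range (N + 1), -(2 * π) * c n *
        ∫ θ in (0 : ℝ)..π, cos ((n + 1) * θ) * cos ((m + 1) * θ) := by
    rw [integral_eq_integral_comp_cos_mul_sin]
    simp_rw [← intervalIntegral.integral_const_mul]
    rw [← intervalIntegral.integral_finsetSum fun n _ => by
      apply Continuous.intervalIntegrable; fun_prop]
    apply intervalIntegral.integral_congr_Ioo_of_le pi_pos.le
    intro θ hθ
    have hs := sin_pos_of_mem_Ioo hθ
    have hd : HasDerivAt (fun t => √(1 - t ^ 2) *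
        (∑ n ∈ Finset.range (N + 1), (2 / ((n : ℝ) + 1)) * c n * chebU n t))
        (∑ n ∈ Finset.range (N + 1), (2 / ((n : ℝ) + 1)) * c n *
          -((n + 1) * cos ((n + 1) * θ) / sin θ)) (cos θ) := by
      refine (HasDerivAt.fun_sum fun n _ =>
        (hasDerivAt_sqrt_one_sub_sq_mul_chebU n hθ).const_mul
          (2 / ((n : ℝ) + 1) * c n)).congr_of_eventuallyEq
        (Filter.Eventually.of_forall fun t => ?_)
      simp only [Finset.mul_sum]
      exact Finset.sum_congr rfl fun n _ => by ring
    simp only [mul_comm (log _) (deriv _ (cos θ)), mul_assoc (deriv _ (cos θ))]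
    rw [intervalIntegral.integral_const_mul, integral_log_abs_sub_mul_deriv m hθ, hd.deriv,
      Finset.sum_mul, Finset.sum_mul]
    refine Finset.sum_congr rfl fun n _ => ?_
    field_simp
  have hr : ∫ x in (-1 : ℝ)..1,
          (∑ n ∈ Finset.range (N + 1), c n * chebU n x) * chebU m x *
            Real.sqrt (1 - x ^ 2) =
      ∑ n ∈ Finset.range (N + 1), c n *
        ∫ θ in (0 : ℝ)..π, sin ((n + 1) * θ) * sin ((m + 1) * θ) := by
    rw [integral_eq_integral_comp_cos_mul_sin]
    simp_rw [← intervalIntegral.integral_const_mul]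
    rw [← intervalIntegral.integral_finsetSum fun n _ => by
      apply Continuous.intervalIntegrable; fun_prop]
    apply intervalIntegral.integral_congr_Ioo_of_le pi_pos.le
    intro θ hθ
    have hs := sin_pos_of_mem_Ioo hθ
    have hsqrt : √(1 - cos θ ^ 2) = sin θ := by
      rw [← abs_sin_eq_sqrt_one_sub_cos_sq, abs_of_pos hs]
    simp only [hsqrt, Finset.sum_mul, ← chebU_cos_mul_sin]
    exact Finset.sum_congr rfl fun n _ => by ring
  rw [hl, hr, Finset.mul_sum]
  refine Finset.sum_congr rfl fun n _ => ?_
  rw [integral_cos_mul_cos_eq_integral_sin_mul_sin, ← mul_assoc, ← mul_assoc]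
  congr 1
  field_simp
end
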